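/- Let G be a finite abelian group and let χ be a generalized character of G whose values on all nonidentity elements are sums of at most two roots of unity. Suppose χ = a·ρ_G + ε·(λ₁ + λ₂ + λ₃ − λ₄) for some integer a, sign ε ∈ {1, −1}, and pairwise distinct irreducible characters λ₁, λ₂, λ₃, λ₄ of G. Then for every nonidentity x ∈ G there exists a root of unity μ such that χ(x) = 2μ. -/

import Mathlib

def IsRootOfUnity (z : ℂ) : Prop := ∃ n : ℕ, 0 < n ∧ z ^ n = 1

def IsSumAtMostTwoRootsOfUnity (z : ℂ) : Prop :=
  z = 0 ∨ IsRootOfUnity z ∨ ∃ u v : ℂ, IsRootOfUnity u ∧ IsRootOfUnity v ∧ z = u + v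

/-!
Put `f = λ₁ + λ₂ + λ₃ - λ₄`, so that `‖χ‖ = ‖f‖` off the identity. By orthogonality of characters,
`‖f‖ ^ 2` has mean `4` over `G`. It is also at most `4` everywhere: `f 1 = 2`, and off the identity
`χ` is a sum of at most two roots of unity. Hence `‖f‖ = 2` on all of `G`, and two roots of unity
whose sum has norm `2` coincide.
-/

section LinearCharacters

open scoped ComplexConjugate

variable {𝕜 G ι : Type*} [RCLike 𝕜] [Group G]

lemma conj_linearChar_apply [Finite G] (φ : G →* 𝕜ˣ) (g : G) :
    conj (φ g : 𝕜) = (φ g : 𝕜)⁻¹ :=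
  have hfin : IsOfFinOrder (φ g : 𝕜) :=
    ((Units.coeHom 𝕜).comp φ).isOfFinOrder (isOfFinOrder_of_finite g)
  (RCLike.inv_eq_conj hfin.norm_eq_one).symm

lemma sum_linearChar_mul_conj [Fintype G] (φ ψ : G →* 𝕜ˣ) [Decidable (φ = ψ)] :
    ∑ g, (φ g : 𝕜) * conj (ψ g : 𝕜) = if φ = ψ then (Fintype.card G : 𝕜) else 0 := by
  classical
  have hcomp : (Units.coeHom 𝕜).comp (φ / ψ) = 1 ↔ φ = ψ := by
    rw [← div_eq_one (a := φ)]
    simp only [MonoidHom.ext_iff, MonoidHom.comp_apply, Units.coeHom_apply, MonoidHom.one_apply,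
      Units.val_eq_one]
  calc ∑ g, (φ g : 𝕜) * conj (ψ g : 𝕜)
      = ∑ g, (Units.coeHom 𝕜).comp (φ / ψ) g := by
        simp [conj_linearChar_apply, div_eq_mul_inv]
    _ = if φ = ψ then (Fintype.card G : 𝕜) else 0 := by
        simp only [sum_hom_units, hcomp, Nat.cast_ite, Nat.cast_zero]

variable [Fintype ι] {φ : ι → G →* 𝕜ˣ}

lemma sum_norm_sq_sum_mul_linearChar [Fintype G] (hφ : Function.Injective φ) (c : ι → 𝕜) :
    ∑ g, ‖∑ i, c i * (φ i g : 𝕜)‖ ^ 2 = Fintype.card G * ∑ i, ‖c i‖ ^ 2 := by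
  classical
  apply RCLike.ofReal_injective (K := 𝕜)
  push_cast
  calc ∑ g, (‖∑ i, c i * (φ i g : 𝕜)‖ : 𝕜) ^ 2
      = ∑ g, ∑ i, ∑ j, c i * conj (c j) * ((φ i g : 𝕜) * conj (φ j g : 𝕜)) := by
        simp only [← RCLike.mul_conj, map_sum, map_mul, Finset.sum_mul_sum, mul_mul_mul_comm]
    _ = ∑ i, ∑ j, c i * conj (c j) * ∑ g, (φ i g : 𝕜) * conj (φ j g : 𝕜) := by
        simp only [Finset.mul_sum]
        rw [Finset.sum_comm]
        exact Finset.sum_congr rfl fun _ _ => Finset.sum_comm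
    _ = Fintype.card G * ∑ i, (‖c i‖ : 𝕜) ^ 2 := by
        simp [sum_linearChar_mul_conj, hφ.eq_iff, RCLike.mul_conj, Finset.mul_sum, mul_comm]

lemma norm_sq_sum_mul_linearChar_eq_of_le [Finite G] (hφ : Function.Injective φ) {c : ι → 𝕜}
    (hle : ∀ g, ‖∑ i, c i * (φ i g : 𝕜)‖ ^ 2 ≤ ∑ i, ‖c i‖ ^ 2) (g : G) :
    ‖∑ i, c i * (φ i g : 𝕜)‖ ^ 2 = ∑ i, ‖c i‖ ^ 2 := by
  have := Fintype.ofFinite G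
  refine (Finset.sum_eq_sum_iff_of_le fun g _ => hle g).mp ?_ g (Finset.mem_univ g)
  simp [sum_norm_sq_sum_mul_linearChar hφ]

lemma norm_linearChar_add_add_sub_eq_two_of_le [Finite G] {φ₁ φ₂ φ₃ φ₄ : G →* 𝕜ˣ}
    (h12 : φ₁ ≠ φ₂) (h13 : φ₁ ≠ φ₃) (h14 : φ₁ ≠ φ₄)
    (h23 : φ₂ ≠ φ₃) (h24 : φ₂ ≠ φ₄) (h34 : φ₃ ≠ φ₄)
    (hle : ∀ x, x ≠ 1 → ‖(φ₁ x : 𝕜) + φ₂ x + φ₃ x - φ₄ x‖ ≤ 2) (x : G) :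
    ‖(φ₁ x : 𝕜) + φ₂ x + φ₃ x - φ₄ x‖ = 2 := by
  let φ : Fin 4 → G →* 𝕜ˣ := ![φ₁, φ₂, φ₃, φ₄]
  let c : Fin 4 → 𝕜 := ![1, 1, 1, -1]
  have hφ : Function.Injective φ := by
    rw [← List.nodup_ofFn]
    simp [φ, h12, h13, h14, h23, h24, h34]
  have hc : ∑ i, ‖c i‖ ^ 2 = 2 ^ 2 := by
    norm_num [c, Fin.sum_univ_succ]
  have hsum (g : G) : ∑ i, c i * (φ i g : 𝕜) = φ₁ g + φ₂ g + φ₃ g - φ₄ g := by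
    simp [c, φ, Fin.sum_univ_four, sub_eq_add_neg]
  have hone : ‖(φ₁ 1 : 𝕜) + φ₂ 1 + φ₃ 1 - φ₄ 1‖ = 2 := by
    simp [one_add_one_eq_two]
  have hle_sq (g : G) : ‖∑ i, c i * (φ i g : 𝕜)‖ ^ 2 ≤ ∑ i, ‖c i‖ ^ 2 := by
    rw [hc, hsum]
    gcongr
    obtain rfl | hg := eq_or_ne g 1
    exacts [hone.le, hle g hg]
  have hsq := norm_sq_sum_mul_linearChar_eq_of_le hφ hle_sq x
  rw [hc, hsum] at hsq
  exact (sq_eq_sq₀ (norm_nonneg _) zero_le_two).mp hsq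

end LinearCharacters

lemma IsRootOfUnity.norm_eq_one {z : ℂ} (hz : IsRootOfUnity z) : ‖z‖ = 1 :=
  (isOfFinOrder_iff_pow_eq_one.mpr hz).norm_eq_one

namespace IsSumAtMostTwoRootsOfUnity

variable {z : ℂ}

lemma norm_le_two (hz : IsSumAtMostTwoRootsOfUnity z) : ‖z‖ ≤ 2 := by
  rcases hz with rfl | hz | ⟨u, v, hu, hv, rfl⟩
  · simp
  · simp [hz.norm_eq_one]
  · calc ‖u + v‖ ≤ ‖u‖ + ‖v‖ := norm_add_le u v
      _ = 2 := by rw [hu.norm_eq_one, hv.norm_eq_one, one_add_one_eq_two]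

lemma exists_eq_two_mul_of_norm_eq_two (hz : IsSumAtMostTwoRootsOfUnity z) (hnorm : ‖z‖ = 2) :
    ∃ μ : ℂ, IsRootOfUnity μ ∧ z = 2 * μ := by
  rcases hz with rfl | hz | ⟨u, v, hu, hv, rfl⟩
  · simp at hnorm
  · simp [hz.norm_eq_one] at hnorm
  · have huv : u = v := by
      apply eq_of_norm_eq_of_norm_add_eq
      · rw [hu.norm_eq_one, hv.norm_eq_one]
      · rw [hnorm, hu.norm_eq_one, hv.norm_eq_one, one_add_one_eq_two]
    exact ⟨u, hu, by rw [← huv, two_mul]⟩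

end IsSumAtMostTwoRootsOfUnity

theorem stmt_10_general {G : Type*} [Group G] [Finite G] {χ : G → ℂ}
    (hval : ∀ x : G, x ≠ 1 → IsSumAtMostTwoRootsOfUnity (χ x))
    {ε : ℂ} (hε : ‖ε‖ = 1) {lam₁ lam₂ lam₃ lam₄ : G →* ℂˣ}
    (h12 : lam₁ ≠ lam₂) (h13 : lam₁ ≠ lam₃) (h14 : lam₁ ≠ lam₄)
    (h23 : lam₂ ≠ lam₃) (h24 : lam₂ ≠ lam₄) (h34 : lam₃ ≠ lam₄)
    (hχ : ∀ x : G, x ≠ 1 →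
      χ x = ε * ((lam₁ x : ℂ) + (lam₂ x : ℂ) + (lam₃ x : ℂ) - (lam₄ x : ℂ))) :
    ∀ x : G, x ≠ 1 → ∃ μ : ℂ, IsRootOfUnity μ ∧ χ x = 2 * μ := by
  have hnorm : ∀ x, x ≠ 1 → ‖χ x‖ = ‖(lam₁ x : ℂ) + lam₂ x + lam₃ x - lam₄ x‖ := by
    intro x hx
    rw [hχ x hx, norm_mul, hε, one_mul]
  have hle : ∀ x, x ≠ 1 → ‖(lam₁ x : ℂ) + lam₂ x + lam₃ x - lam₄ x‖ ≤ 2 := by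
    intro x hx
    rw [← hnorm x hx]
    exact (hval x hx).norm_le_two
  intro x hx
  apply (hval x hx).exists_eq_two_mul_of_norm_eq_two
  rw [hnorm x hx]
  exact norm_linearChar_add_add_sub_eq_two_of_le h12 h13 h14 h23 h24 h34 hle x

theorem stmt_10 {G : Type*} [CommGroup G] [Fintype G] [DecidableEq G]
    (χ : G → ℂ)
    -- values on nonidentity elements are sums of at most two roots of unity
    (hval : ∀ x : G, x ≠ 1 → IsSumAtMostTwoRootsOfUnity (χ x))
    (a ε : ℤ) (hε : ε = 1 ∨ ε = -1)
    (lam₁ lam₂ lam₃ lam₄ : G →* ℂˣ)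
    (h12 : lam₁ ≠ lam₂) (h13 : lam₁ ≠ lam₃) (h14 : lam₁ ≠ lam₄)
    (h23 : lam₂ ≠ lam₃) (h24 : lam₂ ≠ lam₄) (h34 : lam₃ ≠ lam₄)
    -- χ = a·ρ_G + ε·(λ₁ + λ₂ + λ₃ − λ₄)
    (hform : ∀ g : G, χ g = (a : ℂ) * (if g = 1 then (Fintype.card G : ℂ) else 0)
        + (ε : ℂ) * ((lam₁ g : ℂ) + (lam₂ g : ℂ) + (lam₃ g : ℂ) - (lam₄ g : ℂ))) :
    ∀ x : G, x ≠ 1 → ∃ μ : ℂ, IsRootOfUnity μ ∧ χ x = 2 * μ :=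
  stmt_10_general hval (ε := ε) (by rcases hε with rfl | rfl <;> simp) h12 h13 h14 h23 h24 h34
    fun x hx => by simp [hform, hx]
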